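/- Fix l ≥ 2. For symmetric l×l matrices α = (α_{ij}) and β = (β_{ij}) of natural numbers with zero diagonal, let Ξ[α] = ∏_{i<j} (u_i^{(1)}u_j^{(2)} − u_i^{(2)}u_j^{(1)})^{α_{ij}}, a polynomial in the 2l complex variables u_j^{(1)}, u_j^{(2)} (j = 1,…,l). Let 𝐓 = (t_{ij}) and 𝐓' = (t'_{ij}) be skew-symmetric real l×l matrices. Then there exists ε > 0 such that whenever all |t_{ij}| < ε and |t'_{ij}| < ε, the series S = Σ_{α} Σ_{β} (∏_{i<j} t_{ij}^{α_{ij}} t'_{ij}^{β_{ij}} / (α_{ij}!·β_{ij}!)) · ⟨Ξ[α], Ξ[β]⟩, summed over all pairs of symmetric natural-number matrices with zero diagonal, converges and satisfies S · det(1 + 𝐓·𝐓') = 1, i.e. S = det(1 + 𝐓·𝐓')^{−1}. -/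

import Mathlib

set_option autoImplicit false

open MvPolynomial Matrix

/-- The Fock inner product on polynomials in the `2l` variables `u_j^{(1)}, u_j^{(2)}`:
monomials are pairwise orthogonal and `‖∏ variablesᵏ‖² = ∏ k!`. -/
noncomputable def fockInnerL {l : ℕ} (f g : MvPolynomial (Fin l × Fin 2) ℂ) : ℂ :=
  ∑ d ∈ f.support, f.coeff d * star (g.coeff d) * ∏ i, ((d i).factorial : ℂ)

/-- `Ξ[α] = ∏_{i<j} (u_i^{(1)}u_j^{(2)} − u_i^{(2)}u_j^{(1)})^{α_{ij}}`. -/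
noncomputable def XiL {l : ℕ} (α : Matrix (Fin l) (Fin l) ℕ) :
    MvPolynomial (Fin l × Fin 2) ℂ :=
  ∏ p ∈ Finset.univ.filter (fun p : Fin l × Fin l => p.1 < p.2),
    (X (p.1, 0) * X (p.2, 1) - X (p.1, 1) * X (p.2, 0)) ^ α p.1 p.2

/-- The action `f(u₁,…,u_l) ↦ f(u₁A₁,…,u_lA_l)`. -/
noncomputable def actL {l : ℕ} (A : Fin l → Matrix (Fin 2) (Fin 2) ℂ)
    (f : MvPolynomial (Fin l × Fin 2) ℂ) : MvPolynomial (Fin l × Fin 2) ℂ :=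
  MvPolynomial.aeval
    (fun v : Fin l × Fin 2 =>
      C (A v.1 0 v.2) * X (v.1, 0) + C (A v.1 1 v.2) * X (v.1, 1)) f

/-- The matrix coefficient `Φ[α,β](A₁,…,A_l) = ⟨(⊗T(A_j))Ξ[α], Ξ[β]⟩`. -/
noncomputable def PhiL {l : ℕ} (α β : Matrix (Fin l) (Fin l) ℕ)
    (A : Fin l → Matrix (Fin 2) (Fin 2) ℂ) : ℂ :=
  fockInnerL (actL A (XiL α)) (XiL β)

/-- Symmetric `l×l` matrices of natural numbers with zero diagonal. -/
def SymZeroDiag (l : ℕ) : Type :=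
  {M : Matrix (Fin l) (Fin l) ℕ // M.transpose = M ∧ ∀ i, M i i = 0}

/-- The `2l×2l` matrix with `2×2` blocks `t_{ij}·[[0,1],[−1,0]]`. -/
noncomputable def blockT {l : ℕ} (t : Matrix (Fin l) (Fin l) ℝ) :
    Matrix (Fin l × Fin 2) (Fin l × Fin 2) ℂ :=
  Matrix.of fun p q => (t p.1 q.1 : ℂ) * !![0, 1; -1, 0] p.2 q.2

/-- The block-diagonal `2l×2l` matrix with diagonal blocks `A₁,…,A_l`. -/
noncomputable def blockDiagU {l : ℕ} (A : Fin l → Matrix (Fin 2) (Fin 2) ℂ) :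
    Matrix (Fin l × Fin 2) (Fin l × Fin 2) ℂ :=
  Matrix.of fun p q => if p.1 = q.1 then A p.1 p.2 q.2 else 0


theorem jacobi_poly {n : ℕ} (M : Matrix (Fin n) (Fin n) (Polynomial ℝ)) :
    Polynomial.derivative M.det = (M.adjugate * M.map Polynomial.derivative).trace := by
  have h1 : (M.adjugate * M.map Polynomial.derivative).trace
      = ∑ i, (M.updateCol i (fun k => Polynomial.derivative (M k i))).det := by
    unfold Matrix.trace
    refine Finset.sum_congr rfl fun i _ => ?_
    rw [← Matrix.cramer_apply, Matrix.cramer_eq_adjugate_mulVec]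
    simp [Matrix.mul_apply, Matrix.mulVec, dotProduct]
  rw [h1, Matrix.det_apply']
  simp only [Matrix.det_apply']
  rw [Finset.sum_comm, Polynomial.derivative_sum]
  refine Finset.sum_congr rfl fun σ _ => ?_
  rw [← Finset.mul_sum]
  have h2 : Polynomial.derivative ((((Equiv.Perm.sign σ : ℤˣ) : ℤ) : Polynomial ℝ) * ∏ i, M (σ i) i)
     = (((Equiv.Perm.sign σ : ℤˣ) : ℤ) : Polynomial ℝ) * Polynomial.derivative (∏ i, M (σ i) i) := by
    simp [Polynomial.derivative_mul]
  rw [h2, Polynomial.derivative_prod_finset]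
  congr 1
  refine Finset.sum_congr rfl fun i _ => ?_
  rw [← Finset.mul_prod_erase Finset.univ _ (Finset.mem_univ i), mul_comm]
  congr 1
  · simp
  · refine Finset.prod_congr rfl fun j hj => ?_
    rw [Matrix.updateCol_ne (Finset.ne_of_mem_erase hj)]

theorem series_identity {l : ℕ} (A B : Matrix (Fin l) (Fin l) ℝ) (g : ℕ → ℝ)
    (W : ℕ → Matrix (Fin l) (Fin l) ℝ) (g0 : g 0 = 1) (W0 : W 0 = g 0 • B)
    (Ws : ∀ n, W (n+1) = g (n+1) • B + B * Aᵀ * W n)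
    (tr : ∀ n, (Aᵀ * W n).trace = (n+1) * g (n+1)) :
    PowerSeries.mk g * ((B * Aᵀ).charpolyRev : PowerSeries ℝ) = 1 := by
  set N := B * Aᵀ with hN
  set φ : Polynomial ℝ →+* PowerSeries ℝ := Polynomial.coeToPowerSeries.ringHom with hφ
  set M : Matrix (Fin l) (Fin l) (Polynomial ℝ) := 1 - (Polynomial.X : Polynomial ℝ) • N.map Polynomial.C with hM
  set Mp : Matrix (Fin l) (Fin l) (PowerSeries ℝ) := φ.mapMatrix M with hMp
  set G := PowerSeries.mk g with hG
  set D : PowerSeries ℝ := (N.charpolyRev : PowerSeries ℝ) with hD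
  set Wp : Matrix (Fin l) (Fin l) (PowerSeries ℝ) := of fun i j => PowerSeries.mk fun n => W n i j with hWp
  set c := PowerSeries.C (R := ℝ) with hc
  have hDdet : D = Mp.det := by
    rw [hMp, ← RingHom.map_det]; rfl
  have hMpe : Mp = 1 - (PowerSeries.X : PowerSeries ℝ) • N.map c := by
    ext1 i j
    simp [hMp, hM, hφ, Matrix.one_apply, apply_ite, hc]
    exact mul_comm _ _
  have e1 : Mp * Wp = G • B.map c := by
    have : Wp = (PowerSeries.X : PowerSeries ℝ) • (N.map c * Wp) + G • B.map c := by
      refine Matrix.ext fun i j => PowerSeries.ext fun n => ?_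
      cases n with
      | zero => simp [hWp, W0, hG, hc]
      | succ n =>
        simp only [Matrix.add_apply, Matrix.smul_apply, smul_eq_mul, map_add, PowerSeries.coeff_succ_X_mul,
          Matrix.mul_apply, Matrix.map_apply, map_sum, hc, PowerSeries.coeff_C_mul, hG, PowerSeries.coeff_mul_C]
        simp [hWp, Ws]
        rw [Matrix.mul_apply]
        ring
    rw [hMpe, sub_mul, one_mul, smul_mul_assoc, sub_eq_iff_eq_add]
    rw [add_comm]; exact this
  have e2 : D • Wp = G • (Mp.adjugate * B.map c) := by
    rw [hDdet, ← Matrix.one_mul Wp, ← smul_mul_assoc, ← Matrix.adjugate_mul, Matrix.mul_assoc, e1, mul_smul_comm]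
  have e3 : PowerSeries.derivative ℝ G = ((A.map c)ᵀ * Wp).trace := by
    ext n
    have := tr n
    simp only [Matrix.trace, Matrix.diag, Matrix.mul_apply, Matrix.transpose_apply] at this
    simp only [Matrix.trace, Matrix.diag, Matrix.mul_apply, Matrix.transpose_apply, Matrix.map_apply, map_sum, hc, PowerSeries.coeff_C_mul, PowerSeries.coeff_derivative, hG, hWp, Matrix.of_apply, PowerSeries.coeff_mk]
    rw [this]; ring
  have e4 : PowerSeries.derivative ℝ D = - (Mp.adjugate * N.map c).trace := by
    rw [hD, PowerSeries.derivative_coe]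
    have : N.charpolyRev = M.det := rfl
    rw [this, jacobi_poly]
    have h5 : M.map Polynomial.derivative = - N.map Polynomial.C := by
      ext1 i j
      simp [hM, Matrix.one_apply, apply_ite]
    rw [h5]
    rw [Matrix.mul_neg, Matrix.trace_neg]
    change φ (- (M.adjugate * N.map Polynomial.C).trace) = _
    rw [map_neg]
    congr 1
    rw [hMp, ← RingHom.map_adjugate]
    simp [Matrix.trace, Matrix.mul_apply, hφ, hc]
  have e5 : D * PowerSeries.derivative ℝ G = - (G * PowerSeries.derivative ℝ D) := by
    rw [e3, e4, ← smul_eq_mul, ← Matrix.trace_smul, ← mul_smul_comm, e2, mul_smul_comm, Matrix.trace_smul]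
    have : N.map c = B.map c * (A.map c)ᵀ := by
      rw [hN, ← Matrix.transpose_map]
      exact Matrix.map_mul
    rw [this, Matrix.trace_mul_comm, Matrix.mul_assoc]
    simp
  apply PowerSeries.derivative.ext
  · rw [Derivation.leibniz]
    simp only [smul_eq_mul, e5]
    simp
  · have : D.constantCoeff = 1 := by
      rw [hD, Polynomial.constantCoeff_coe]
      simp [Polynomial.coeff_zero_eq_eval_zero]
    simp [this, hG, g0]

theorem series_bound {l : ℕ} (hl : 2 ≤ l) (A B : Matrix (Fin l) (Fin l) ℝ) (g : ℕ → ℝ)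
    (W : ℕ → Matrix (Fin l) (Fin l) ℝ) (g0 : g 0 = 1) (W0 : W 0 = g 0 • B)
    (Ws : ∀ n, W (n+1) = g (n+1) • B + B * Aᵀ * W n)
    (tr : ∀ n, (Aᵀ * W n).trace = (n+1) * g (n+1))
    (hA : ∀ i j, |A i j| ≤ 1 / (2 * l)) (hB : ∀ i j, |B i j| ≤ 1 / (2 * l)) (n : ℕ) :
    |g n| ≤ (1/2)^n ∧ ∀ i j, |W n i j| ≤ 1/(2*l) * (n+1) * (1/2)^n := by
  have hl0 : (0:ℝ) < l := by positivity
  set ε : ℝ := 1 / (2*l) with hε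
  have hεl : l * ε = 1/2 := by rw [hε]; field_simp
  have hε0 : 0 < ε := by positivity
  induction n with
  | zero => exact ⟨by simp [g0], fun i j => by simpa [W0, g0] using hB i j⟩
  | succ n ih =>
    obtain ⟨ih1, ih2⟩ := ih
    have key : |g (n+1)| ≤ (1/2)^(n+1) := by
      have h1 : |(n+1) * g (n+1)| ≤ ∑ i : Fin l, ∑ j : Fin l, ε * (ε * (n+1) * (1/2)^n) := by
        rw [← tr n]
        simp only [Matrix.trace, Matrix.diag, Matrix.mul_apply, Matrix.transpose_apply]
        refine (Finset.abs_sum_le_sum_abs _ _).trans (Finset.sum_le_sum fun i _ => ?_)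
        refine (Finset.abs_sum_le_sum_abs _ _).trans (Finset.sum_le_sum fun j _ => ?_)
        rw [abs_mul]
        exact mul_le_mul (hA _ _) (ih2 _ _) (abs_nonneg _) hε0.le
      simp only [Finset.sum_const, Finset.card_univ, Fintype.card_fin, nsmul_eq_mul] at h1
      have h2 : (l:ℝ) * (l * (ε * (ε * (n+1) * (1/2)^n))) = (l*ε)^2 * (n+1) * (1/2)^n := by ring
      rw [h2, hεl, abs_mul, abs_of_pos (by positivity : (0:ℝ) < n+1)] at h1
      have h3 : (n+1) * |g (n+1)| ≤ (n+1) * (1/2)^(n+1) := by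
        refine h1.trans ?_
        have : (0:ℝ) < (n+1) * (1/2)^n := by positivity
        have e : ((1:ℝ)/2)^(n+1) = (1/2)^n * (1/2) := pow_succ _ _
        rw [e]; nlinarith
      exact le_of_mul_le_mul_left h3 (by positivity)
    refine ⟨key, fun i j => ?_⟩
    rw [Ws, Matrix.add_apply, Matrix.smul_apply, smul_eq_mul, Matrix.mul_assoc]
    have h1 : |(B * (Aᵀ * W n)) i j| ≤ ∑ k : Fin l, ε * ∑ m : Fin l, ε * (ε * (n+1) * (1/2)^n) := by
      simp only [Matrix.mul_apply, Matrix.transpose_apply]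
      refine (Finset.abs_sum_le_sum_abs _ _).trans (Finset.sum_le_sum fun i _ => ?_)
      rw [abs_mul]
      refine mul_le_mul (hB _ _) ?_ (abs_nonneg _) hε0.le
      refine (Finset.abs_sum_le_sum_abs _ _).trans (Finset.sum_le_sum fun j _ => ?_)
      rw [abs_mul]
      exact mul_le_mul (hA _ _) (ih2 _ _) (abs_nonneg _) hε0.le
    simp only [Finset.sum_const, Finset.card_univ, Fintype.card_fin, nsmul_eq_mul] at h1
    have h2 : (l:ℝ) * (ε * (l * (ε * (ε * (n+1) * (1/2)^n)))) = (l*ε)^2 * (ε * (n+1) * (1/2)^n) := by ring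
    rw [h2, hεl] at h1
    have h3 : |g (n+1) * B i j| ≤ (1/2)^(n+1) * ε := by
      rw [abs_mul]
      exact mul_le_mul key (hB _ _) (abs_nonneg _) (by positivity)
    refine (abs_add_le _ _).trans ((add_le_add h3 h1).trans ?_)
    have : (0:ℝ) < ε * (n+1) * (1/2)^n := by positivity
    push_cast
    rw [pow_succ]; nlinarith

theorem series_sum {l : ℕ} (N : Matrix (Fin l) (Fin l) ℝ) (g : ℕ → ℝ)
    (hg : ∀ n, |g n| ≤ (1/2)^n)
    (h : PowerSeries.mk g * (N.charpolyRev : PowerSeries ℝ) = 1) :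
    (∑' n, g n) * (1 - N).det = 1 := by
  have hgs : Summable fun n => ‖g n‖ :=
    Summable.of_nonneg_of_le (fun _ => norm_nonneg _) hg summable_geometric_two
  have hfin : ∀ n ∉ Finset.range (N.charpolyRev.natDegree + 1), N.charpolyRev.coeff n = 0 := by
    intro n hn
    apply Polynomial.coeff_eq_zero_of_natDegree_lt
    simp at hn; omega
  have hds : Summable fun n => ‖N.charpolyRev.coeff n‖ := by
    apply summable_of_ne_finset_zero (s := Finset.range (N.charpolyRev.natDegree + 1))
    intro n hn; simp [hfin n hn]
  have hd : ∑' n, N.charpolyRev.coeff n = (1 - N).det := by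
    rw [tsum_eq_sum hfin]
    have := Polynomial.eval_eq_sum_range (p := N.charpolyRev) 1
    simp only [one_pow, mul_one] at this
    rw [← this, Matrix.charpolyRev, ← Polynomial.coe_evalRingHom, RingHom.map_det]
    congr 1
    ext1 i j
    simp [Matrix.one_apply, apply_ite]
  rw [← hd, tsum_mul_tsum_eq_tsum_sum_antidiagonal_of_summable_norm hgs hds]
  have : ∀ n, ∑ kl ∈ Finset.HasAntidiagonal.antidiagonal n, g kl.1 * N.charpolyRev.coeff kl.2 = if n = 0 then 1 else 0 := by
    intro n
    have := congrArg (PowerSeries.coeff n) h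
    rw [PowerSeries.coeff_mul, PowerSeries.coeff_one] at this
    simpa using this
  simp [this]

noncomputable def fk {σ : Type} [Fintype σ] (f g : MvPolynomial σ ℝ) : ℝ :=
  ∑ d ∈ f.support, f.coeff d * g.coeff d * ∏ i, ((d i).factorial : ℝ)

section fk
variable {σ : Type} [Fintype σ]

theorem fk_eq_sum (f g : MvPolynomial σ ℝ) (s : Finset (σ →₀ ℕ)) (hs : f.support ⊆ s) :
    fk f g = ∑ d ∈ s, f.coeff d * g.coeff d * ∏ i, ((d i).factorial : ℝ) := by
  refine Finset.sum_subset hs fun d _ hd => ?_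
  simp [MvPolynomial.notMem_support_iff.1 hd]

theorem fk_symm (f g : MvPolynomial σ ℝ) : fk f g = fk g f := by
  classical
  rw [fk_eq_sum f g (f.support ∪ g.support) Finset.subset_union_left,
    fk_eq_sum g f (f.support ∪ g.support) Finset.subset_union_right]
  exact Finset.sum_congr rfl fun d _ => by ring

theorem fk_add_left (f f' g : MvPolynomial σ ℝ) : fk (f + f') g = fk f g + fk f' g := by
  classical
  rw [fk_eq_sum (f + f') g (f.support ∪ f'.support) MvPolynomial.support_add,
    fk_eq_sum f g (f.support ∪ f'.support) Finset.subset_union_left,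
    fk_eq_sum f' g (f.support ∪ f'.support) Finset.subset_union_right, ← Finset.sum_add_distrib]
  exact Finset.sum_congr rfl fun d _ => by rw [MvPolynomial.coeff_add]; ring

theorem fk_C_mul_left (a : ℝ) (f g : MvPolynomial σ ℝ) : fk (C a * f) g = a * fk f g := by
  rw [fk_eq_sum (C a * f) g f.support, fk, Finset.mul_sum]
  · exact Finset.sum_congr rfl fun d _ => by rw [MvPolynomial.coeff_C_mul]; ring
  · intro d hd
    rw [MvPolynomial.mem_support_iff, MvPolynomial.coeff_C_mul] at hd
    exact MvPolynomial.mem_support_iff.2 (right_ne_zero_of_mul hd)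

theorem fk_zero_left (g : MvPolynomial σ ℝ) : fk 0 g = 0 := by simp [fk]

theorem fk_sum_left {ι : Type*} (s : Finset ι) (f : ι → MvPolynomial σ ℝ) (g : MvPolynomial σ ℝ) :
    fk (∑ i ∈ s, f i) g = ∑ i ∈ s, fk (f i) g := by
  classical
  induction s using Finset.induction_on with
  | empty => simp [fk_zero_left]
  | insert a s ha ih => rw [Finset.sum_insert ha, Finset.sum_insert ha, fk_add_left, ih]

theorem fk_C_mul_right (a : ℝ) (f g : MvPolynomial σ ℝ) : fk f (C a * g) = a * fk f g := by
  rw [fk_symm, fk_C_mul_left, fk_symm]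

theorem fk_sum_right {ι : Type*} (s : Finset ι) (f : ι → MvPolynomial σ ℝ) (g : MvPolynomial σ ℝ) :
    fk g (∑ i ∈ s, f i) = ∑ i ∈ s, fk g (f i) := by
  rw [fk_symm, fk_sum_left]; exact Finset.sum_congr rfl fun i _ => fk_symm _ _

theorem fk_monomial_left (d : σ →₀ ℕ) (a : ℝ) (g : MvPolynomial σ ℝ) :
    fk (monomial d a) g = a * g.coeff d * ∏ i, ((d i).factorial : ℝ) := by
  classical
  rw [fk_eq_sum _ g {d} MvPolynomial.support_monomial_subset]
  simp

theorem fk_adj (i : σ) (f g : MvPolynomial σ ℝ) : fk (X i * f) g = fk f (pderiv i g) := by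
  classical
  induction f using MvPolynomial.induction_on' with
  | add p q hp hq => rw [mul_add, fk_add_left, fk_add_left, hp, hq]
  | monomial d a =>
    rw [MvPolynomial.X, MvPolynomial.monomial_mul, one_mul, fk_monomial_left, fk_monomial_left,
      MvPolynomial.coeff_pderiv, add_comm]
    have : ∏ j, (((d + Finsupp.single i 1 : σ →₀ ℕ) j).factorial : ℝ)
        = (d i + 1) * ∏ j, ((d j).factorial : ℝ) := by
      rw [← Finset.mul_prod_erase Finset.univ _ (Finset.mem_univ i),
        ← Finset.mul_prod_erase Finset.univ (fun j => ((d j).factorial : ℝ)) (Finset.mem_univ i), ← mul_assoc]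
      congr 1
      · simp [Nat.factorial_succ]
      · refine Finset.prod_congr rfl fun j hj => ?_
        have := Finset.ne_of_mem_erase hj
        simp [Finsupp.single_apply, this.symm]
    rw [this]; ring

end fk

/-- The quadratic form `∑ A i j u_i v_j`. -/
noncomputable def qf {l : ℕ} (A : Matrix (Fin l) (Fin l) ℝ) : MvPolynomial (Fin l × Fin 2) ℝ :=
  ∑ i, ∑ j, C (A i j) * (X (i, 0) * X (j, 1))

theorem pderiv_qf_zero {l : ℕ} (A : Matrix (Fin l) (Fin l) ℝ) (i : Fin l) :
    pderiv (i, (0 : Fin 2)) (qf A) = ∑ k, C (A i k) * X (k, 1) := by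
  simp only [qf, map_sum, MvPolynomial.pderiv_C_mul, Derivation.leibniz, smul_eq_mul,
    MvPolynomial.pderiv_X]
  rw [Finset.sum_eq_single i]
  · simp [Pi.single_apply]
  · intro b _ hb
    simp [Pi.single_apply, hb]
  · simp

theorem pderiv_qf_one {l : ℕ} (A : Matrix (Fin l) (Fin l) ℝ) (k : Fin l) :
    pderiv (k, (1 : Fin 2)) (qf A) = ∑ m, C (A m k) * X (m, 0) := by
  simp only [qf, map_sum, MvPolynomial.pderiv_C_mul, Derivation.leibniz, smul_eq_mul,
    MvPolynomial.pderiv_X]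
  refine Finset.sum_congr rfl fun m _ => ?_
  rw [Finset.sum_eq_single k]
  · simp [Pi.single_apply]
  · intro b _ hb
    simp [Pi.single_apply, hb]
  · simp

noncomputable def gS {l : ℕ} (A B : Matrix (Fin l) (Fin l) ℝ) (n : ℕ) : ℝ :=
  fk (qf A ^ n) (qf B ^ n) / (n.factorial * n.factorial)

noncomputable def wS {l : ℕ} (A B : Matrix (Fin l) (Fin l) ℝ) (n : ℕ) :
    Matrix (Fin l) (Fin l) ℝ :=
  of fun i j => fk (X (i, 0) * (X (j, 1) * qf A ^ n)) (qf B ^ (n+1)) / (n.factorial * (n+1).factorial)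

theorem gS_zero {l : ℕ} (A B : Matrix (Fin l) (Fin l) ℝ) : gS A B 0 = 1 := by
  have := fk_monomial_left (σ := Fin l × Fin 2) 0 1 1
  simp at this
  simp [gS, this]

theorem w_step {l : ℕ} (A B : Matrix (Fin l) (Fin l) ℝ) (n : ℕ) (i j : Fin l) :
    fk (X (i, 0) * (X (j, 1) * qf A ^ n)) (qf B ^ (n+1)) =
      (n+1) * ∑ k, B i k * fk (pderiv (k, (1 : Fin 2)) (X (j, 1) * qf A ^ n)) (qf B ^ n) := by
  rw [fk_adj, MvPolynomial.pderiv_pow, pderiv_qf_zero, Finset.mul_sum, fk_sum_right, Finset.mul_sum]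
  refine Finset.sum_congr rfl fun k _ => ?_
  rw [fk_symm (pderiv _ _), ← fk_adj]
  have : (((n+1 : ℕ) : MvPolynomial (Fin l × Fin 2) ℝ)) * qf B ^ (n+1-1) * (C (B i k) * X (k, 1))
      = C ((n+1) * B i k) * (X (k, 1) * qf B ^ n) := by
    simp only [map_mul, map_add, Nat.add_sub_cancel, map_natCast, map_one]
    push_cast; ring
  rw [this, fk_C_mul_right, fk_symm]; ring

theorem w_step2 {l : ℕ} (A : Matrix (Fin l) (Fin l) ℝ) (n : ℕ) (j k : Fin l)
    (h : MvPolynomial (Fin l × Fin 2) ℝ) :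
    fk (pderiv (k, (1 : Fin 2)) (X (j, 1) * qf A ^ n)) h =
      (if k = j then fk (qf A ^ n) h else 0) +
        n * ∑ m, A m k * fk (X (m, 0) * (X (j, 1) * qf A ^ (n-1))) h := by
  rw [Derivation.leibniz, MvPolynomial.pderiv_pow, pderiv_qf_one, smul_eq_mul, smul_eq_mul, fk_add_left,
    add_comm]
  congr 1
  · rw [MvPolynomial.pderiv_X]
    by_cases hk : k = j
    · subst hk; simp
    · have : j ≠ k := fun h => hk h.symm
      simp [Pi.single_apply, hk, this, fk_zero_left]
  · rw [Finset.mul_sum, Finset.mul_sum, fk_sum_left, Finset.mul_sum]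
    refine Finset.sum_congr rfl fun m _ => ?_
    have : X (j, 1) * ((n : MvPolynomial (Fin l × Fin 2) ℝ) * qf A ^ (n-1) * (C (A m k) * X (m, 0)))
      = C (n * A m k) * (X (m, 0) * (X (j, 1) * qf A ^ (n-1))) := by
      simp only [map_mul, map_natCast]
      ring
    rw [this, fk_C_mul_left]; ring

theorem wS_zero {l : ℕ} (A B : Matrix (Fin l) (Fin l) ℝ) : wS A B 0 = gS A B 0 • B := by
  ext i j
  simp only [wS, Matrix.of_apply]
  rw [w_step]
  simp only [w_step2]
  simp [gS]
  ring

theorem wS_succ {l : ℕ} (A B : Matrix (Fin l) (Fin l) ℝ) (n : ℕ) :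
    wS A B (n+1) = gS A B (n+1) • B + B * Aᵀ * wS A B n := by
  ext i j
  rw [Matrix.mul_assoc, Matrix.add_apply, Matrix.smul_apply, Matrix.mul_apply]
  simp only [Matrix.mul_apply, Matrix.transpose_apply, wS, Matrix.of_apply]
  rw [w_step]
  simp only [w_step2, Nat.add_sub_cancel, mul_add, Finset.sum_add_distrib, mul_ite, mul_zero,
    Finset.sum_ite_eq', Finset.mem_univ, if_true, add_div, gS, smul_eq_mul]
  have e : ((n+1+1 : ℕ).factorial : ℝ) = (n+1+1) * (n+1).factorial := by
    rw [Nat.factorial_succ]; push_cast; ring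
  have e' : ((n+1 : ℕ).factorial : ℝ) = (n+1) * n.factorial := by
    rw [Nat.factorial_succ]; push_cast; ring
  have p0 : (n.factorial : ℝ) ≠ 0 := by positivity
  have p1 : (n + 1 : ℝ) ≠ 0 := by positivity
  have p2 : (n + 1 + 1 : ℝ) ≠ 0 := by positivity
  rw [e, e']
  congr 1
  · push_cast; field_simp
  · rw [Finset.mul_sum, Finset.sum_div]
    refine Finset.sum_congr rfl fun k _ => ?_
    rw [Finset.mul_sum, Finset.mul_sum, Finset.mul_sum, Finset.mul_sum, Finset.sum_div]
    refine Finset.sum_congr rfl fun m _ => ?_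
    push_cast; field_simp

theorem wS_trace {l : ℕ} (A B : Matrix (Fin l) (Fin l) ℝ) (n : ℕ) :
    (Aᵀ * wS A B n).trace = (n+1) * gS A B (n+1) := by
  have h : fk (qf A ^ (n+1)) (qf B ^ (n+1)) =
      ∑ i, ∑ j, A i j * fk (X (i, 0) * (X (j, 1) * qf A ^ n)) (qf B ^ (n+1)) := by
    have : qf A ^ (n+1) = ∑ i, ∑ j, C (A i j) * (X (i, 0) * (X (j, 1) * qf A ^ n)) := by
      rw [pow_succ']
      conv_lhs => rw [qf]
      rw [Finset.sum_mul]
      refine Finset.sum_congr rfl fun i _ => ?_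
      rw [Finset.sum_mul]
      refine Finset.sum_congr rfl fun j _ => ?_
      rw [← qf]; ring
    conv_lhs => rw [this]
    simp only [fk_sum_left, fk_C_mul_left]
  have e' : ((n+1 : ℕ).factorial : ℝ) = (n+1) * n.factorial := by
    rw [Nat.factorial_succ]; push_cast; ring
  have p0 : (n.factorial : ℝ) ≠ 0 := by positivity
  have p1 : (n + 1 : ℝ) ≠ 0 := by positivity
  rw [gS, h, Finset.sum_comm]
  simp only [Matrix.trace, Matrix.diag, Matrix.mul_apply, Matrix.transpose_apply, wS, Matrix.of_apply]
  rw [Finset.sum_div, Finset.mul_sum]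
  refine Finset.sum_congr rfl fun k _ => ?_
  rw [Finset.sum_div, Finset.mul_sum]
  refine Finset.sum_congr rfl fun m _ => ?_
  rw [e']; field_simp

abbrev UPair (l : ℕ) : Type := {p : Fin l × Fin l // p.1 < p.2}

noncomputable def br {l : ℕ} (s : ℝ) (p : UPair l) : MvPolynomial (Fin l × Fin 2) ℝ :=
  X (p.1.1, 0) * X (p.1.2, 1) + C s * (X (p.1.1, 1) * X (p.1.2, 0))

noncomputable def xi {l : ℕ} (s : ℝ) (α : UPair l → ℕ) : MvPolynomial (Fin l × Fin 2) ℝ :=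
  ∏ p, br s p ^ α p

theorem qf_eq {l : ℕ} (s : ℝ) (A : Matrix (Fin l) (Fin l) ℝ) (hA : ∀ i j, A j i = s * A i j)
    (h0 : ∀ i, A i i = 0) : qf A = ∑ p : UPair l, C (A p.1.1 p.1.2) * br s p := by
  rw [qf, ← Finset.sum_product' (f := fun i j => C (A i j) * (X (i, 0) * X (j, 1)))]
  rw [Finset.univ_product_univ]
  rw [← Finset.sum_filter_add_sum_filter_not Finset.univ (fun p : Fin l × Fin l => p.1 < p.2)]
  have h2 : ∑ p : Fin l × Fin l with ¬ p.1 < p.2, C (A p.1 p.2) * (X (p.1, (0 : Fin 2)) * X (p.2, (1 : Fin 2)))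
      = ∑ p : Fin l × Fin l with p.1 < p.2, C (A p.2 p.1) * (X (p.2, (0 : Fin 2)) * X (p.1, (1 : Fin 2))) := by
    symm
    refine Finset.sum_of_injOn Prod.swap (fun a _ b _ h => Prod.swap_injective h) ?_ ?_ ?_
    · intro p hp
      simp at hp ⊢
      exact hp.le
    · intro p hp hp'
      simp at hp hp'
      have : p.1 = p.2 := by
        by_contra hne
        exact hp' p.2 p.1 (lt_of_le_of_ne hp (Ne.symm hne)) rfl
      rw [this, h0]; simp
    · intro p _; rfl
  rw [h2, ← Finset.sum_add_distrib]
  rw [Finset.sum_subtype (p := fun p : Fin l × Fin l => p.1 < p.2) _ (fun x => by simp)]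
  refine Finset.sum_congr rfl fun p _ => ?_
  rw [hA p.1.1 p.1.2, br, map_mul]; ring

theorem qf_pow {l : ℕ} (s : ℝ) (A : Matrix (Fin l) (Fin l) ℝ) (hA : ∀ i j, A j i = s * A i j)
    (h0 : ∀ i, A i i = 0) (n : ℕ) :
    qf A ^ n = ∑ α ∈ Finset.piAntidiag (Finset.univ : Finset (UPair l)) n,
      C (n.factorial * ∏ p : UPair l, (A p.1.1 p.1.2 ^ α p / (α p).factorial)) * xi s α := by
  rw [qf_eq s A hA h0, Finset.sum_pow_eq_sum_piAntidiag]
  refine Finset.sum_congr rfl fun α hα => ?_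
  have hs := (Finset.mem_piAntidiag.1 hα).1
  have := Nat.multinomial_spec Finset.univ α
  rw [hs] at this
  have h3 : (n.factorial : ℝ) * ∏ p : UPair l, (A p.1.1 p.1.2 ^ α p / (α p).factorial)
     = (Nat.multinomial Finset.univ α : ℝ) * ∏ p : UPair l, A p.1.1 p.1.2 ^ α p := by
    rw [Finset.prod_div_distrib, ← this]
    have : (∏ p : UPair l, ((α p).factorial : ℝ)) ≠ 0 := Finset.prod_ne_zero_iff.2 fun p _ => by positivity
    push_cast
    field_simp
  rw [h3]
  simp only [mul_pow, Finset.prod_mul_distrib, xi, map_mul, map_prod, map_pow, map_natCast]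
  ring

noncomputable def fT {l : ℕ} (s : ℝ) (A B : Matrix (Fin l) (Fin l) ℝ)
    (x : (UPair l → ℕ) × (UPair l → ℕ)) : ℝ :=
  (∏ p : UPair l, (A p.1.1 p.1.2 ^ x.1 p * B p.1.1 p.1.2 ^ x.2 p /
    ((x.1 p).factorial * (x.2 p).factorial : ℕ))) * fk (xi s x.1) (xi s x.2)

def FF (l n : ℕ) : Finset ((UPair l → ℕ) × (UPair l → ℕ)) :=
  Finset.piAntidiag Finset.univ n ×ˢ Finset.piAntidiag Finset.univ n

theorem gS_eq_sum {l : ℕ} (s : ℝ) (A B : Matrix (Fin l) (Fin l) ℝ) (hA : ∀ i j, A j i = s * A i j)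
    (hA0 : ∀ i, A i i = 0) (hB : ∀ i j, B j i = s * B i j) (hB0 : ∀ i, B i i = 0) (n : ℕ) :
    ∑ x ∈ FF l n, fT s A B x = gS A B n := by
  rw [gS, qf_pow s A hA hA0, qf_pow s B hB hB0, fk_sum_left, FF, Finset.sum_product, Finset.sum_div]
  refine Finset.sum_congr rfl fun α _ => ?_
  rw [fk_sum_right, Finset.sum_div]
  refine Finset.sum_congr rfl fun β _ => ?_
  rw [fk_C_mul_left, fk_C_mul_right, fT]
  have : ∏ p : UPair l, (A p.1.1 p.1.2 ^ α p * B p.1.1 p.1.2 ^ β p /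
    ((α p).factorial * (β p).factorial : ℕ)) = (∏ p : UPair l, (A p.1.1 p.1.2 ^ α p / (α p).factorial)) *
      ∏ p : UPair l, (B p.1.1 p.1.2 ^ β p / (β p).factorial) := by
    rw [← Finset.prod_mul_distrib]
    refine Finset.prod_congr rfl fun p _ => ?_
    push_cast
    field_simp
  rw [this]
  have p0 : (n.factorial : ℝ) ≠ 0 := by positivity
  field_simp

theorem xi_homog {l : ℕ} (s : ℝ) (α : UPair l → ℕ) : (xi s α).IsHomogeneous (∑ p, 2 * α p) := by
  refine MvPolynomial.IsHomogeneous.prod _ _ _ fun p _ => ?_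
  refine MvPolynomial.IsHomogeneous.pow ?_ _
  refine MvPolynomial.IsHomogeneous.add ((isHomogeneous_X _ _).mul (isHomogeneous_X _ _)) ?_
  have := (isHomogeneous_C (Fin l × Fin 2) s).mul ((isHomogeneous_X ℝ (p.1.1, (1 : Fin 2))).mul (isHomogeneous_X ℝ (p.1.2, (0 : Fin 2))))
  simpa using this

theorem fk_xi_zero {l : ℕ} (s : ℝ) (α β : UPair l → ℕ) (h : ∑ p, α p ≠ ∑ p, β p) :
    fk (xi s α) (xi s β) = 0 := by
  refine Finset.sum_eq_zero fun d hd => ?_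
  by_contra hne
  have h1 := xi_homog s α (MvPolynomial.mem_support_iff.1 hd)
  have h2 := xi_homog s β (d := d) (by intro h0; simp [h0] at hne)
  rw [h1, ← Finset.mul_sum, ← Finset.mul_sum] at h2
  omega

def Dom {σ : Type} (f g : MvPolynomial σ ℝ) : Prop := ∀ d, |f.coeff d| ≤ g.coeff d

theorem Dom.mul {σ : Type} {f g f' g' : MvPolynomial σ ℝ} (h : Dom f g) (h' : Dom f' g') :
    Dom (f * f') (g * g') := by
  classical
  intro d
  rw [MvPolynomial.coeff_mul, MvPolynomial.coeff_mul]
  refine (Finset.abs_sum_le_sum_abs _ _).trans (Finset.sum_le_sum fun x _ => ?_)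
  rw [abs_mul]
  exact mul_le_mul (h _) (h' _) (abs_nonneg _) ((abs_nonneg _).trans (h _))

theorem Dom.one {σ : Type} : Dom (1 : MvPolynomial σ ℝ) 1 := by
  classical
  intro d
  rw [MvPolynomial.coeff_one]; split_ifs <;> simp

theorem Dom.pow {σ : Type} {f g : MvPolynomial σ ℝ} (h : Dom f g) (n : ℕ) : Dom (f ^ n) (g ^ n) := by
  induction n with
  | zero => simpa using Dom.one
  | succ n ih => rw [pow_succ, pow_succ]; exact ih.mul h

theorem Dom.prod {σ ι : Type} (s : Finset ι) (f g : ι → MvPolynomial σ ℝ) (h : ∀ i, Dom (f i) (g i)) :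
    Dom (∏ i ∈ s, f i) (∏ i ∈ s, g i) := by
  classical
  induction s using Finset.induction_on with
  | empty => simpa using Dom.one
  | insert a s ha ih => rw [Finset.prod_insert ha, Finset.prod_insert ha]; exact (h a).mul ih

theorem Dom.X {σ : Type} (i : σ) : Dom (X i : MvPolynomial σ ℝ) (MvPolynomial.X i) := by
  classical
  intro d
  rw [MvPolynomial.coeff_X]; split_ifs <;> simp

theorem dom_br {l : ℕ} (p : UPair l) : Dom (br (-1) p) (br 1 p) := by
  intro d
  have h1 := ((Dom.X (p.1.1, (0 : Fin 2))).mul (Dom.X (p.1.2, (1 : Fin 2)))) d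
  have h2 := ((Dom.X (p.1.1, (1 : Fin 2))).mul (Dom.X (p.1.2, (0 : Fin 2)))) d
  rw [br, br, MvPolynomial.coeff_add, MvPolynomial.coeff_add, MvPolynomial.coeff_C_mul, MvPolynomial.coeff_C_mul]
  refine (abs_add_le _ _).trans (add_le_add h1 ?_)
  simpa using h2

theorem Dom.fk {σ : Type} [Fintype σ] {f g f' g' : MvPolynomial σ ℝ} (h : Dom f g) (h' : Dom f' g') :
    |fk f f'| ≤ fk g g' := by
  classical
  rw [fk_eq_sum f f' (f.support ∪ g.support) Finset.subset_union_left,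
    fk_eq_sum g g' (f.support ∪ g.support) Finset.subset_union_right]
  refine (Finset.abs_sum_le_sum_abs _ _).trans (Finset.sum_le_sum fun x _ => ?_)
  rw [abs_mul, abs_mul, abs_of_nonneg (Finset.prod_nonneg fun i _ => by positivity : (0:ℝ) ≤ ∏ i, ((x i).factorial : ℝ))]
  refine mul_le_mul_of_nonneg_right ?_ (Finset.prod_nonneg fun i _ => by positivity)
  exact mul_le_mul (h _) (h' _) (abs_nonneg _) ((abs_nonneg _).trans (h _))

theorem abs_fT_le {l : ℕ} (A B : Matrix (Fin l) (Fin l) ℝ) (x : (UPair l → ℕ) × (UPair l → ℕ)) :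
    |fT (-1) A B x| ≤ fT 1 (A.map abs) (B.map abs) x := by
  rw [fT, fT, abs_mul]
  have h : |∏ p : UPair l, (A p.1.1 p.1.2 ^ x.1 p * B p.1.1 p.1.2 ^ x.2 p /
    ((x.1 p).factorial * (x.2 p).factorial : ℕ))| = ∏ p : UPair l, ((A.map abs) p.1.1 p.1.2 ^ x.1 p * (B.map abs) p.1.1 p.1.2 ^ x.2 p /
    ((x.1 p).factorial * (x.2 p).factorial : ℕ)) := by
    rw [Finset.abs_prod]
    refine Finset.prod_congr rfl fun p _ => ?_
    rw [abs_div, abs_mul, abs_pow, abs_pow, Nat.abs_cast]; rfl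
  rw [← h]
  refine mul_le_mul_of_nonneg_left ?_ (abs_nonneg _)
  exact Dom.fk (Dom.prod _ _ _ fun p => (dom_br p).pow _) (Dom.prod _ _ _ fun p => (dom_br p).pow _)

theorem hasSum_graded {X : Type*} (h : X → ℝ) (deg : X → ℕ) (F : ℕ → Finset X)
    (hF : ∀ n, ∀ x ∈ F n, deg x = n) (hF' : ∀ x, h x ≠ 0 → x ∈ F (deg x))
    (c : ℕ → ℝ) (hc : Summable c) (hb : ∀ n, ∑ x ∈ F n, |h x| ≤ c n) :
    HasSum h (∑' n, ∑ x ∈ F n, h x) := by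
  classical
  have hc0 : ∀ n, 0 ≤ c n := fun n => (Finset.sum_nonneg fun _ _ => abs_nonneg _).trans (hb n)
  have hs : Summable fun x => |h x| := by
    refine summable_of_sum_le (c := ∑' n, c n) (fun _ => abs_nonneg _) fun u => ?_
    rw [← Finset.sum_fiberwise_of_maps_to (t := u.image deg) (g := deg) (fun x hx => Finset.mem_image_of_mem _ hx)]
    refine le_trans (Finset.sum_le_sum fun n _ => ?_) (hc.sum_le_tsum (u.image deg) fun n _ => hc0 n)
    refine le_trans ?_ (hb n)
    rw [← Finset.sum_filter_ne_zero]
    refine Finset.sum_le_sum_of_subset_of_nonneg (fun x hx => ?_) fun _ _ _ => abs_nonneg _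
    obtain ⟨hx1, hne⟩ := Finset.mem_filter.1 hx
    have := hF' x (by simpa using hne)
    rwa [(Finset.mem_filter.1 hx1).2] at this
  have hs' : Summable h := hs.of_abs
  have h1 := hs'.hasSum
  have h2 := ((Equiv.sigmaFiberEquiv deg).hasSum_iff).2 h1
  have h3 := h2.sigma (g := fun n => ∑ x ∈ F n, h x) (fun n => by
    have : HasSum (fun x : {x // deg x = n} => h x) (∑ x ∈ (F n).subtype (fun x => deg x = n), h x) := by
      refine hasSum_sum_of_ne_finset_zero fun x hx => ?_
      by_contra hne
      apply hx
      have := hF' x hne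
      rw [x.2] at this
      simpa using this
    rw [Finset.sum_subtype_of_mem h (hF n)] at this
    exact this)
  rw [h3.tsum_eq]
  exact h1

theorem main_hasSum {l : ℕ} (hl : 2 ≤ l) (A B : Matrix (Fin l) (Fin l) ℝ)
    (hA : Aᵀ = -A) (hB : Bᵀ = -B) (hAε : ∀ i j, |A i j| < 1 / (2 * l)) (hBε : ∀ i j, |B i j| < 1 / (2 * l)) :
    HasSum (fT (-1) A B) (∑' n, gS A B n) ∧ (∑' n, gS A B n) * (1 + A * B).det = 1 := by
  have hA1 : ∀ i j, A j i = -1 * A i j := fun i j => by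
    have := congrFun (congrFun hA i) j
    simpa using this
  have hB1 : ∀ i j, B j i = -1 * B i j := fun i j => by
    have := congrFun (congrFun hB i) j
    simpa using this
  have hA0 : ∀ i, A i i = 0 := fun i => by have := hA1 i i; linarith
  have hB0 : ∀ i, B i i = 0 := fun i => by have := hB1 i i; linarith
  constructor
  · simp only [← gS_eq_sum (-1) A B hA1 hA0 hB1 hB0]
    refine hasSum_graded (fT (-1) A B) (fun x => ∑ p, x.1 p) (FF l) ?_ ?_ (fun n => (1/2)^n) summable_geometric_two ?_
    · intro n x hx
      exact (Finset.mem_piAntidiag.1 (Finset.mem_product.1 hx).1).1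
    · intro x hx
      have : ∑ p, x.1 p = ∑ p, x.2 p := by
        by_contra hne
        exact hx (by rw [fT, fk_xi_zero _ _ _ hne, mul_zero])
      simp [FF, this]
    · intro n
      refine (Finset.sum_le_sum fun x _ => abs_fT_le A B x).trans ?_
      rw [gS_eq_sum 1 (A.map abs) (B.map abs) (fun i j => by simp [hA1 i j]) (by simp [hA0])
        (fun i j => by simp [hB1 i j]) (by simp [hB0])]
      exact (le_abs_self _).trans (series_bound hl (A.map abs) (B.map abs) _ _ (gS_zero _ _) (wS_zero _ _)
        (wS_succ _ _) (wS_trace _ _) (fun i j => by simpa using (hAε i j).le)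
        (fun i j => by simpa using (hBε i j).le) n).1
  · have := series_sum (B * Aᵀ) (gS A B) (fun n => (series_bound hl A B _ _ (gS_zero _ _) (wS_zero _ _)
        (wS_succ _ _) (wS_trace _ _) (fun i j => (hAε i j).le)
        (fun i j => (hBε i j).le) n).1) (series_identity A B _ _ (gS_zero _ _) (wS_zero _ _)
        (wS_succ _ _) (wS_trace _ _))
    rw [hA, Matrix.mul_neg, sub_neg_eq_add, Matrix.det_one_add_mul_comm] at this
    exact this

theorem fock_map {l : ℕ} (f g : MvPolynomial (Fin l × Fin 2) ℝ) :
    fockInnerL (MvPolynomial.map Complex.ofRealHom f) (MvPolynomial.map Complex.ofRealHom g) = (fk f g : ℂ) := by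
  rw [fockInnerL, fk, MvPolynomial.support_map_of_injective _ Complex.ofReal_injective]
  push_cast
  refine Finset.sum_congr rfl fun d _ => ?_
  simp [MvPolynomial.coeff_map]

theorem XiL_eq {l : ℕ} (α : Matrix (Fin l) (Fin l) ℕ) :
    XiL α = MvPolynomial.map Complex.ofRealHom (xi (-1) (fun p : UPair l => α p.1.1 p.1.2)) := by
  rw [XiL, xi, map_prod, Finset.prod_subtype (p := fun p : Fin l × Fin l => p.1 < p.2) _ (fun x => by simp)]
  refine Finset.prod_congr rfl fun p _ => ?_
  simp [br, sub_eq_add_neg]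

def szEquiv (l : ℕ) : SymZeroDiag l ≃ (UPair l → ℕ) where
  toFun M p := M.1 p.1.1 p.1.2
  invFun α := ⟨of fun i j => if h : i < j then α ⟨(i, j), h⟩ else if h : j < i then α ⟨(j, i), h⟩ else 0, by
    constructor
    · ext i j
      simp only [Matrix.transpose_apply, Matrix.of_apply]
      rcases lt_trichotomy i j with h | h | h
      · simp [h, h.not_gt]
      · simp [h]
      · simp [h, h.not_gt]
    · intro i; simp⟩
  left_inv M := by
    apply Subtype.ext
    ext i j
    have hs := congrFun (congrFun M.2.1 i) j
    rw [Matrix.transpose_apply] at hs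
    simp only [Matrix.of_apply]
    rcases lt_trichotomy i j with h | h | h
    · simp [h]
    · subst h; simp [M.2.2]
    · simp [h, h.not_gt, hs]
  right_inv α := by
    funext p
    simp [p.2]

theorem generating_function_inner_products (l : ℕ) (hl : 2 ≤ l) :
    ∃ ε > (0 : ℝ), ∀ t t' : Matrix (Fin l) (Fin l) ℝ,
      t.transpose = -t → t'.transpose = -t' →
      (∀ i j, |t i j| < ε) → (∀ i j, |t' i j| < ε) →
      ∃ S : ℂ,
        HasSum
          (fun ab : SymZeroDiag l × SymZeroDiag l =>
            ((∏ p ∈ Finset.univ.filter (fun p : Fin l × Fin l => p.1 < p.2),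
              t p.1 p.2 ^ ab.1.val p.1 p.2 * t' p.1 p.2 ^ ab.2.val p.1 p.2 /
                ((ab.1.val p.1 p.2).factorial * (ab.2.val p.1 p.2).factorial : ℕ) : ℝ) : ℂ)
              * fockInnerL (XiL ab.1.val) (XiL ab.2.val))
          S ∧
        S * ((Matrix.det ((1 : Matrix (Fin l) (Fin l) ℝ) + t * t') : ℝ) : ℂ) = 1 := by
  refine ⟨1 / (2 * l), by positivity, fun t t' ht ht' hε hε' => ?_⟩
  obtain ⟨h1, h2⟩ := main_hasSum hl t t' ht ht' hε hε'
  refine ⟨((∑' n, gS t t' n : ℝ) : ℂ), ?_, ?_⟩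
  · have h3 := (Complex.hasSum_ofReal.2 h1)
    have h4 := (((szEquiv l).prodCongr (szEquiv l)).hasSum_iff).2 h3
    convert h4 using 1
    funext ab
    rw [XiL_eq, XiL_eq, fock_map, Finset.prod_subtype (p := fun p : Fin l × Fin l => p.1 < p.2) _ (fun x => by simp)]
    simp only [Function.comp, fT, Complex.ofReal_mul]
    rfl
  · exact_mod_cast h2
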